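/- Assume φ satisfies the LSCC property. Then: (1) for every ū ∈ X the map ε ↦ V_ε(ū) is nonincreasing, i.e. V_{ε₁}(ū) ≤ V_{ε₀}(ū) whenever ε₁ ≥ ε₀; (2) for every ū ∈ X, V_ε(ū) increases to φ(ū) as ε ↓ 0; (3) for every family (ū_ε)_{ε>0} ⊂ X with ū_ε →σ ū and limsup_{ε↓0} d(ū_ε,ū) < ∞, one has φ(ū) ≤ liminf_{ε↓0} V_ε(ū_ε). -/

import Mathlib

/-!
The core is the comparison of `V_ε` with a Moreau–Yosida regularization of `φ`. A competitor `u`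
with speed `m` satisfies `d(x, u(t)) ≤ ∫₀ᵗ m`, and the weighted Hardy inequality
`∫ (∫₀ᵗ m)² dμ_ε ≤ 4ε² ∫ m² dμ_ε` (`hardy`: Cauchy–Schwarz with an exponential weight, then Tonelli)
gives `I_ε[u] ≥ ∫ (d(x, u)²/(8ε) + φ(u)) dμ_ε`. As `μ_ε` is a probability measure,
`V_ε(x) ≥ inf_y (d(x, y)²/(8ε) + φ(y))` (`le_Veps`).

Γ-liminf inequality (`le_liminf_Veps`): if `V_ε(u_ε) < c` along a sequence `ε → 0`, almost minimal
points `y_ε` satisfy `φ(y_ε) < c`, and coercivity yields `d(u_ε, y_ε)² = O(ε)`. By (MT2) also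
`y_ε → ū` in `σ`, and lower semicontinuity gives `φ(ū) ≤ c`.

Monotonicity (`Veps_antitone`): the time change `t ↦ (ε₀/ε₁) t` sends competitors for `ε₀` to
competitors for `ε₁`, preserves the potential part and multiplies the kinetic part by `ε₀/ε₁ ≤ 1`.

Pointwise convergence: the constant curve shows `V_ε(x) ≤ φ(x)` (`Veps_le`), and the liminf
inequality for the constant family is the matching lower bound.
-/

open MeasureTheory Filter Topology Set ENNReal

noncomputable section

namespace WED

variable {X : Type*} [MetricSpace X]

/-- The exponential probability measure `μ_ε = ε⁻¹ e^{-t/ε} dt` on `(0,∞)`. -/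
def expMeasure (ε : ℝ) : Measure ℝ :=
  (volume.restrict (Ioi (0:ℝ))).withDensity fun t => ENNReal.ofReal (ε⁻¹ * Real.exp (-t / ε))

/-- The positive part of an extended real, as an extended nonnegative real. -/
def epos (x : EReal) : ℝ≥0∞ := if x = ⊤ then ⊤ else ENNReal.ofReal x.toReal

/-- The absolute value of an extended real, as an extended nonnegative real. -/
def eabs (x : EReal) : ℝ≥0∞ := epos x ⊔ epos (-x)

/-- The (extended-real valued) integral of an extended-real valued function, defined as the
difference between the integrals of the positive and of the negative part. -/
def eIntegral (μ : Measure ℝ) (f : ℝ → EReal) : EReal :=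
  ((∫⁻ t, epos (f t) ∂μ : ℝ≥0∞) : EReal) - ((∫⁻ t, epos (-f t) ∂μ : ℝ≥0∞) : EReal)

/-- `m` is *the* metric derivative of the curve `u` on the set `I ⊆ ℝ`:  `m` is a nonnegative
locally integrable function, `d(u s, u t) ≤ ∫_s^t m` (so that `u` is absolutely continuous),
and `m t` is the limit of the difference quotients `d(u s, u t)/|s-t|` at a.e. `t ∈ I`. -/
structure IsMetricDerivOn (u : ℝ → X) (m : ℝ → ℝ) (I : Set ℝ) : Prop where
  nonneg : ∀ t, 0 ≤ m t
  locInt : ∀ s ∈ I, ∀ t ∈ I, IntegrableOn m (Icc s t) volume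
  dist_le : ∀ s ∈ I, ∀ t ∈ I, s ≤ t → dist (u s) (u t) ≤ ∫ r in Icc s t, m r
  limit : ∀ᵐ t ∂(volume.restrict I),
    Tendsto (fun s => dist (u s) (u t) / |s - t|) (𝓝[I \ {t}] t) (𝓝 (m t))

/-- `u ∈ AC²_loc(I; X)`, with metric derivative `m`. -/
def AC2LocOn (u : ℝ → X) (m : ℝ → ℝ) (I : Set ℝ) : Prop :=
  IsMetricDerivOn u m I ∧ ∀ s ∈ I, ∀ t ∈ I, IntegrableOn (fun r => m r ^ 2) (Icc s t) volume

/-- `u ∈ AC²(I; X)`, with metric derivative `m`. -/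
def AC2On (u : ℝ → X) (m : ℝ → ℝ) (I : Set ℝ) : Prop :=
  IsMetricDerivOn u m I ∧ IntegrableOn (fun r => m r ^ 2) I volume

/-- The integrand `(ε/2)|u'|²(t) + φ(u(t))` of the WED functional. -/
def wedIntegrand (φ : X → EReal) (ε : ℝ) (u : ℝ → X) (m : ℝ → ℝ) (t : ℝ) : EReal :=
  ((ε / 2 * m t ^ 2 : ℝ) : EReal) + φ (u t)

/-- The WED functional `I_ε[u] = ∫₀^∞ ((ε/2)|u'|² + φ(u)) dμ_ε`. -/
def WEDfun (φ : X → EReal) (ε : ℝ) (u : ℝ → X) (m : ℝ → ℝ) : EReal :=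
  eIntegral (expMeasure ε) (wedIntegrand φ ε u m)

/-- The admissible class `𝒜_x^ε`: curves `u ∈ AC²_loc([0,∞);X)` (with metric derivative `m`)
with `u 0 = x` and `∫₀^∞ |u'|² dμ_ε < ∞`. -/
def Admissible (ε : ℝ) (x : X) (u : ℝ → X) (m : ℝ → ℝ) : Prop :=
  u 0 = x ∧ AC2LocOn u m (Ici 0) ∧
    (∫⁻ t, ENNReal.ofReal (m t ^ 2) ∂expMeasure ε) < ⊤

/-- The value function `V_ε(x) = inf { I_ε[u] : u ∈ 𝒜_x^ε }`. -/
def Veps (φ : X → EReal) (ε : ℝ) (x : X) : EReal :=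
  ⨅ (p : {p : (ℝ → X) × (ℝ → ℝ) // Admissible ε x p.1 p.2}),
    WEDfun φ ε p.1.1 p.1.2

/-- `u` (with metric derivative `m`) minimizes the WED functional `I_ε` over `𝒜_x^ε`. -/
def IsMinimizer (φ : X → EReal) (ε : ℝ) (x : X) (u : ℝ → X) (m : ℝ → ℝ) : Prop :=
  Admissible ε x u m ∧
    ∀ v n, Admissible ε x v n → WEDfun φ ε u m ≤ WEDfun φ ε v n

/-- The compatibility conditions (MT1), (MT2) between the distance `d` and the auxiliary
topology `σ`. -/
structure Compatible (σ : TopologicalSpace X) : Prop where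
  mt1 : ∀ (u v : ℕ → X) (x y : X), Tendsto u atTop (@nhds X σ x) →
    Tendsto v atTop (@nhds X σ y) →
    ENNReal.ofReal (dist x y) ≤ Filter.liminf (fun n => ENNReal.ofReal (dist (u n) (v n))) atTop
  mt2 : ∀ U : Set X, IsOpen[σ] U → ∀ x ∈ U, ∃ V : Set X, IsOpen[σ] V ∧ x ∈ V ∧
    ∃ δ : ℝ, 0 < δ ∧ ∀ y : X, Metric.infDist y V < δ → y ∈ U

/-- The standard lower semicontinuity–compactness–coercivity (LSCC) assumptions on a proper
functional `φ : X → (-∞,∞]`, with respect to the auxiliary topology `σ`. -/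
structure LSCC (σ : TopologicalSpace X) (φ : X → EReal) (ustar : X) (A B : ℝ) : Prop where
  hA : 0 ≤ A
  hB : 0 ≤ B
  proper : ∃ x, φ x ≠ ⊤
  ne_bot : ∀ x, φ x ≠ ⊥
  lsc : ∀ (u : ℕ → X) (x : X), (∃ C : ℝ, ∀ n k, dist (u n) (u k) ≤ C) →
    Tendsto u atTop (@nhds X σ x) → φ x ≤ Filter.liminf (fun n => φ (u n)) atTop
  cpt : ∀ u : ℕ → X, (∃ C : ℝ, ∀ n, φ (u n) ≤ (C : EReal)) →
    (∃ C : ℝ, ∀ n k, dist (u n) (u k) ≤ C) →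
    ∃ (x : X) (j : ℕ → ℕ), StrictMono j ∧ Tendsto (u ∘ j) atTop (@nhds X σ x)
  coercive : ∀ u v : X, ((-(B * dist u v ^ 2 + (B * dist v ustar ^ 2 + A)) : ℝ) : EReal) ≤ φ u

/-- The local (descending) slope `|∂φ|(x) = limsup_{v→x} (φ(x)-φ(v))⁺/d(x,v)`. -/
def slope (φ : X → EReal) (x : X) : ℝ≥0∞ :=
  Filter.limsup (fun v => epos (φ x - φ v) / ENNReal.ofReal (dist x v)) (𝓝[≠] x)

/-- The relaxed slope `|∂⁻φ|`: the σ-sequential lower semicontinuous envelope of the local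
slope along `d`-bounded sequences with bounded energy. -/
def relaxedSlope (σ : TopologicalSpace X) (φ : X → EReal) (x : X) : ℝ≥0∞ :=
  ⨅ (u : ℕ → X) (_ : Tendsto u atTop (@nhds X σ x))
    (_ : ∃ C : ℝ, ∀ n, dist (u n) x ≤ C ∧ φ (u n) ≤ (C : EReal)),
    Filter.liminf (fun n => slope φ (u n)) atTop

/-- `G_ε(x) = sqrt(2(φ(x) - V_ε(x))/ε)` if `V_ε(x) < ∞`, and `∞` otherwise. -/
def Geps (φ : X → EReal) (ε : ℝ) (x : X) : ℝ≥0∞ :=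
  if Veps φ ε x = ⊤ then ⊤
  else (2 * epos (φ x - Veps φ ε x) / ENNReal.ofReal ε) ^ (1/2 : ℝ)

/-- The measure `|u'| dt` on `I` associated with the speed `m` of a curve. -/
def speedMeasure (m : ℝ → ℝ) (I : Set ℝ) : Measure ℝ :=
  (volume.restrict I).withDensity fun t => ENNReal.ofReal (m t)

/-- Membership in `L^p(μ)`, `p ∈ [1,∞]`, for an `ℝ≥0∞`-valued function. -/
def MemLpENN (f : ℝ → ℝ≥0∞) (p : ℝ≥0∞) (μ : Measure ℝ) : Prop :=
  if p = ⊤ then ∃ C : ℝ≥0∞, C ≠ ⊤ ∧ ∀ᵐ t ∂μ, f t ≤ C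
  else (∫⁻ t, f t ^ p.toReal ∂μ) < ⊤

/-- `g` is an `L^p`-moderated upper gradient for `φ`: for every absolutely continuous curve
`u` (with metric derivative `m`) on a compact interval such that `φ∘u ∈ L^p(|u'|dt)` and
`g∘u ∈ L¹(|u'|dt)`, one has `|φ(u t) - φ(u s)| ≤ ∫_s^t g(u r) |u'|(r) dr`. -/
def IsModeratedUpperGradient (φ : X → EReal) (g : X → ℝ≥0∞) (p : ℝ≥0∞) : Prop :=
  ∀ (a b : ℝ), a ≤ b → ∀ (u : ℝ → X) (m : ℝ → ℝ), IsMetricDerivOn u m (Icc a b) →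
    MemLpENN (fun t => eabs (φ (u t))) p (speedMeasure m (Icc a b)) →
    (∫⁻ t in Icc a b, g (u t) * ENNReal.ofReal (m t)) < ⊤ →
    ∀ s ∈ Icc a b, ∀ t ∈ Icc a b, s ≤ t →
      (φ (u t) ≤ φ (u s) + ((∫⁻ r in Icc s t, g (u r) * ENNReal.ofReal (m r) : ℝ≥0∞) : EReal) ∧
       φ (u s) ≤ φ (u t) + ((∫⁻ r in Icc s t, g (u r) * ENNReal.ofReal (m r) : ℝ≥0∞) : EReal))

/-- A real function `f` is locally absolutely continuous on `[0,∞)` with density `g`. -/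
def RealACLoc (f g : ℝ → ℝ) : Prop :=
  (∀ b : ℝ, 0 ≤ b → IntegrableOn g (Icc 0 b) volume) ∧
  ∀ t : ℝ, 0 ≤ t → f t = f 0 + ∫ r in Icc 0 t, g r

/-- A real function `f` belongs to `AC²_loc([0,∞);ℝ)`, with derivative `g`. -/
def RealAC2Loc (f g : ℝ → ℝ) : Prop :=
  RealACLoc f g ∧ ∀ b : ℝ, 0 ≤ b → IntegrableOn (fun t => g t ^ 2) (Icc 0 b) volume

/-- The compact-open topology on curves `[0,∞) → X` induced by the auxiliary topology `σ`. -/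
def compactOpenOf (σ : TopologicalSpace X) : TopologicalSpace (ℝ → X) :=
  TopologicalSpace.generateFrom
    {S | ∃ (K : Set ℝ) (U : Set X), K ⊆ Ici 0 ∧ IsCompact K ∧ IsOpen[σ] U ∧
      S = {f : ℝ → X | MapsTo f K U}}

/-- The WED slope `|∂_w φ|(x) = limsup_{ε↓0} G_ε(x)`. -/
def wedSlope (φ : X → EReal) (x : X) : ℝ≥0∞ :=
  Filter.limsup (fun ε => Geps φ ε x) (𝓝[>] (0:ℝ))

/-- The relaxed WED slope `|∂_w^- φ|`. -/
def relaxedWedSlope (σ : TopologicalSpace X) (φ : X → EReal) (x : X) : ℝ≥0∞ :=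
  ⨅ (u : ℕ → X) (_ : Tendsto u atTop (@nhds X σ x))
    (_ : ∃ C : ℝ, ∀ n, dist (u n) x ≤ C ∧ φ (u n) ≤ (C : EReal)),
    Filter.liminf (fun n => wedSlope φ (u n)) atTop

/-- The φ-conditioned local slope `|∂̃ψ|(x) = limsup_{v→x, φ(v)→φ(x)} (ψ(x)-ψ(v))⁺/d(x,v)`. -/
def condSlope (φ ψ : X → EReal) (x : X) : ℝ≥0∞ :=
  Filter.limsup (fun v => epos (ψ x - ψ v) / ENNReal.ofReal (dist x v))
    ((𝓝[≠] x) ⊓ Filter.comap φ (𝓝 (φ x)))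

/-- `φ` is geodesically `λ`-convex: every pair of points of `D(φ)` is joined by a
constant-speed geodesic along which `φ` is `λ`-convex. -/
def GeodesicLambdaConvex (φ : X → EReal) (lam : ℝ) : Prop :=
  ∀ v₀ v₁ : X, φ v₀ ≠ ⊤ → φ v₁ ≠ ⊤ → ∃ γ : ℝ → X, γ 0 = v₀ ∧ γ 1 = v₁ ∧
    (∀ s ∈ Icc (0:ℝ) 1, ∀ t ∈ Icc (0:ℝ) 1, dist (γ s) (γ t) = |t - s| * dist v₀ v₁) ∧
    ∀ t ∈ Icc (0:ℝ) 1, φ (γ t) ≤ ((1 - t : ℝ) : EReal) * φ v₀ + ((t : ℝ) : EReal) * φ v₁ -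
      ((lam / 2 * t * (1 - t) * dist v₀ v₁ ^ 2 : ℝ) : EReal)

end WED
namespace WED

/-! ### Integrals of extended-real valued functions -/

lemma epos_coe (a : ℝ) : epos (a : EReal) = ENNReal.ofReal a := by
  simp [epos]

lemma epos_mono {x y : EReal} (h : x ≤ y) : epos x ≤ epos y := by
  induction x using EReal.rec with
  | bot => simp [epos]
  | top => rw [top_le_iff.mp h]
  | coe a =>
    induction y using EReal.rec with
    | bot => simp at h
    | top => simp [epos]
    | coe b =>
      rw [epos_coe, epos_coe]
      exact ENNReal.ofReal_le_ofReal (by exact_mod_cast h)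

/-- The convention `⊤ - ⊤ = ⊥` is harmless here: subtraction on `EReal` is monotone in its first
and antitone in its second argument without exception. -/
lemma eIntegral_mono (μ : Measure ℝ) {f g : ℝ → EReal} (h : ∀ᵐ t ∂μ, f t ≤ g t) :
    eIntegral μ f ≤ eIntegral μ g := by
  refine EReal.sub_le_sub ?_ ?_ <;> rw [EReal.coe_ennreal_le_coe_ennreal_iff]
  · exact lintegral_mono_ae (h.mono fun t ht => epos_mono ht)
  · exact lintegral_mono_ae (h.mono fun t ht => epos_mono (EReal.neg_le_neg_iff.mpr ht))

lemma eIntegral_coe (μ : Measure ℝ) {g : ℝ → ℝ} (hg : Integrable g μ) :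
    eIntegral μ (fun t => (g t : EReal)) = ((∫ t, g t ∂μ : ℝ) : EReal) := by
  have h1 : ∫⁻ t, ENNReal.ofReal (g t) ∂μ ≠ ⊤ := hg.lintegral_lt_top.ne
  have h2 : ∫⁻ t, ENNReal.ofReal (-g t) ∂μ ≠ ⊤ := hg.neg.lintegral_lt_top.ne
  rw [integral_eq_lintegral_pos_part_sub_lintegral_neg_part hg, EReal.coe_sub,
    EReal.coe_ennreal_toReal h1, EReal.coe_ennreal_toReal h2]
  simp only [eIntegral, ← EReal.coe_neg, epos_coe]

/-! ### The exponential measure -/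

lemma lintegral_exp_Ioi {a : ℝ} (ha : 0 < a) (s : ℝ) :
    ∫⁻ t in Ioi s, ENNReal.ofReal (Real.exp (-(a * t))) =
      ENNReal.ofReal (Real.exp (-(a * s)) / a) := by
  have hi := integrableOn_exp_mul_Ioi (neg_lt_zero.mpr ha) s
  have h := ofReal_integral_eq_lintegral_ofReal hi (ae_of_all _ fun t => (Real.exp_pos _).le)
  rw [integral_exp_mul_Ioi (neg_lt_zero.mpr ha)] at h
  simp only [neg_mul, neg_div_neg_eq] at h
  exact h.symm

lemma measurable_weight (ε : ℝ) :
    Measurable fun t : ℝ => ENNReal.ofReal (ε⁻¹ * Real.exp (-t / ε)) := by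
  fun_prop

lemma lintegral_expMeasure (ε : ℝ) (F : ℝ → ℝ≥0∞) :
    ∫⁻ t, F t ∂expMeasure ε =
      ∫⁻ t in Ioi (0:ℝ), ENNReal.ofReal (ε⁻¹ * Real.exp (-t / ε)) * F t := by
  rw [expMeasure, lintegral_withDensity_eq_lintegral_mul_non_measurable _ (measurable_weight ε)
    (ae_of_all _ fun t => ENNReal.ofReal_lt_top)]
  rfl

lemma isProbabilityMeasure_expMeasure {ε : ℝ} (hε : 0 < ε) :
    IsProbabilityMeasure (expMeasure ε) := by
  constructor
  rw [← lintegral_one, lintegral_expMeasure]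
  have h := lintegral_exp_Ioi (inv_pos.mpr hε) 0
  simp only [mul_one, ENNReal.ofReal_mul (inv_pos.mpr hε).le]
  rw [lintegral_const_mul' _ _ ENNReal.ofReal_ne_top]
  have e : ∀ t : ℝ, -t / ε = -(ε⁻¹ * t) := fun t => by ring
  simp only [e]
  rw [h, ← ENNReal.ofReal_mul (inv_pos.mpr hε).le]
  simp [hε.ne']

lemma expMeasure_absolutelyContinuous (ε : ℝ) :
    expMeasure ε ≪ volume.restrict (Ioi (0:ℝ)) :=
  withDensity_absolutelyContinuous _ _

lemma eIntegral_expMeasure_const {ε : ℝ} (hε : 0 < ε) (c : EReal) :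
    eIntegral (expMeasure ε) (fun _ => c) = c := by
  have := isProbabilityMeasure_expMeasure hε
  simp only [eIntegral, lintegral_const, measure_univ, mul_one]
  induction c using EReal.rec <;> simp [epos, ← EReal.coe_neg]
  rename_i a
  rw [← EReal.coe_sub]
  congr 1
  rcases le_total 0 a with h | h <;> simp [h]

/-- With `c = ε₀ / ε₁`, the map `t ↦ c t` pushes `μ_{ε₁}` forward to `μ_{ε₀}`. -/
lemma lintegral_expMeasure_comp_mul {ε₀ ε₁ : ℝ} (h₀ : 0 < ε₀) (h₁ : 0 < ε₁) (F : ℝ → ℝ≥0∞) :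
    ∫⁻ t, F (ε₀ / ε₁ * t) ∂expMeasure ε₁ = ∫⁻ t, F t ∂expMeasure ε₀ := by
  rw [lintegral_expMeasure, lintegral_expMeasure]
  set c := ε₀ / ε₁ with hc
  have hcpos : 0 < c := by positivity
  rw [← lintegral_indicator measurableSet_Ioi, ← lintegral_indicator measurableSet_Ioi]
  set G : ℝ → ℝ≥0∞ := (Ioi (0:ℝ)).indicator
    fun t => ENNReal.ofReal (ε₀⁻¹ * Real.exp (-t / ε₀)) * F t with hG
  have key : ∀ t, (Ioi (0:ℝ)).indicator
      (fun t => ENNReal.ofReal (ε₁⁻¹ * Real.exp (-t / ε₁)) * F (c * t)) t =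
      ENNReal.ofReal c * G (c * t) := by
    intro t
    by_cases ht : 0 < t
    · have hct : 0 < c * t := mul_pos hcpos ht
      rw [hG, indicator_of_mem (mem_Ioi.mpr ht), indicator_of_mem (mem_Ioi.mpr hct), ← mul_assoc,
        ← ENNReal.ofReal_mul hcpos.le]
      congr 2
      rw [hc, ← mul_assoc]
      congr 1
      · field_simp
      · congr 1; field_simp
    · have hct : ¬ 0 < c * t := fun h => ht (pos_of_mul_pos_right h hcpos.le)
      rw [hG, indicator_of_notMem (by simpa using ht), indicator_of_notMem (by simpa using hct),
        mul_zero]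
  simp only [key]
  rw [lintegral_const_mul' _ _ ENNReal.ofReal_ne_top]
  have := lintegral_map_equiv (μ := volume) G (MeasurableEquiv.mulLeft₀ c hcpos.ne')
  simp only [MeasurableEquiv.coe_mulLeft₀] at this
  rw [← this, Real.map_volume_mul_left hcpos.ne', lintegral_smul_measure, smul_eq_mul, ← mul_assoc,
    ← ENNReal.ofReal_mul hcpos.le, abs_of_pos (inv_pos.mpr hcpos), mul_inv_cancel₀ hcpos.ne']
  simp

lemma eIntegral_expMeasure_comp_mul {ε₀ ε₁ : ℝ} (h₀ : 0 < ε₀) (h₁ : 0 < ε₁) (f : ℝ → EReal) :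
    eIntegral (expMeasure ε₁) (fun t => f (ε₀ / ε₁ * t)) = eIntegral (expMeasure ε₀) f := by
  unfold eIntegral
  rw [lintegral_expMeasure_comp_mul h₀ h₁ (fun t => epos (f t)),
    lintegral_expMeasure_comp_mul h₀ h₁ (fun t => epos (-f t))]

/-! ### Monotonicity in the parameter and the upper bound -/

lemma IsMetricDerivOn.comp_mul {X : Type*} [MetricSpace X] {u : ℝ → X} {m : ℝ → ℝ}
    (h : IsMetricDerivOn u m (Ici 0)) {c : ℝ} (hc : 0 < c) :
    IsMetricDerivOn (fun t => u (c * t)) (fun t => c * m (c * t)) (Ici 0) where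
  nonneg t := mul_nonneg hc.le (h.nonneg _)
  locInt s hs t ht := by
    rcases le_or_gt s t with hst | hst
    · refine Integrable.const_mul ?_ c
      have h1 := (intervalIntegrable_iff_integrableOn_Icc_of_le
        (mul_le_mul_of_nonneg_left hst hc.le)).mpr
        (h.locInt (c * s) (mul_nonneg hc.le hs) (c * t) (mul_nonneg hc.le ht))
      have h2 := h1.comp_mul_left (c := c)
      rw [mul_div_cancel_left₀ _ hc.ne', mul_div_cancel_left₀ _ hc.ne'] at h2
      exact (intervalIntegrable_iff_integrableOn_Icc_of_le hst).mp h2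
    · simp [Icc_eq_empty_of_lt hst]
  dist_le s hs t ht hst := by
    have h1 := h.dist_le (c * s) (mul_nonneg hc.le hs) (c * t) (mul_nonneg hc.le ht)
      (mul_le_mul_of_nonneg_left hst hc.le)
    rw [integral_Icc_eq_integral_Ioc, ← intervalIntegral.integral_of_le
      (mul_le_mul_of_nonneg_left hst hc.le), ← intervalIntegral.mul_integral_comp_mul_left] at h1
    rw [integral_Icc_eq_integral_Ioc, ← intervalIntegral.integral_of_le hst,
      intervalIntegral.integral_const_mul]
    exact h1
  limit := by
    have hq : Measure.QuasiMeasurePreserving (fun t : ℝ => c * t) volume volume := by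
      refine ⟨by fun_prop, ?_⟩
      rw [Real.map_volume_mul_left hc.ne']
      exact Measure.smul_absolutelyContinuous
    have h1 := hq.ae ((ae_restrict_iff' measurableSet_Ici).mp h.limit)
    rw [ae_restrict_iff' measurableSet_Ici]
    filter_upwards [h1] with t ht ht0
    have h2 := ht (mul_nonneg hc.le ht0)
    have h3 : Tendsto (fun s => c * s) (𝓝[Ici 0 \ {t}] t) (𝓝[Ici 0 \ {c * t}] (c * t)) := by
      refine tendsto_nhdsWithin_of_tendsto_nhds_of_eventually_within _ ?_ ?_
      · exact ((continuous_const_mul c).tendsto t).mono_left nhdsWithin_le_nhds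
      · filter_upwards [self_mem_nhdsWithin] with s hs
        exact ⟨mul_nonneg hc.le hs.1, fun h => hs.2 (mul_left_cancel₀ hc.ne' h)⟩
    refine ((h2.comp h3).const_mul c).congr fun s => ?_
    simp only [Function.comp]
    rw [← mul_sub, abs_mul, abs_of_pos hc]
    by_cases hst : |s - t| = 0
    · simp [hst]
    · field_simp

lemma Admissible.comp_mul {X : Type*} [MetricSpace X] {ε₀ ε₁ : ℝ} (h₀ : 0 < ε₀) (h₁ : 0 < ε₁)
    {x : X} {u : ℝ → X} {m : ℝ → ℝ} (h : Admissible ε₀ x u m) :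
    Admissible ε₁ x (fun t => u (ε₀ / ε₁ * t)) (fun t => ε₀ / ε₁ * m (ε₀ / ε₁ * t)) := by
  obtain ⟨hx, ⟨hm, hm2⟩, hfin⟩ := h
  have hc : 0 < ε₀ / ε₁ := by positivity
  refine ⟨by simpa using hx, ⟨hm.comp_mul hc, ?_⟩, ?_⟩
  · intro s hs t ht
    rcases le_or_gt s t with hst | hst
    · simp only [mul_pow]
      refine Integrable.const_mul ?_ _
      have h1 := (intervalIntegrable_iff_integrableOn_Icc_of_le
        (mul_le_mul_of_nonneg_left hst hc.le)).mpr
        (hm2 (ε₀ / ε₁ * s) (mul_nonneg hc.le hs) (ε₀ / ε₁ * t) (mul_nonneg hc.le ht))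
      have h2 := h1.comp_mul_left (c := ε₀ / ε₁)
      rw [mul_div_cancel_left₀ _ hc.ne', mul_div_cancel_left₀ _ hc.ne'] at h2
      exact (intervalIntegrable_iff_integrableOn_Icc_of_le hst).mp h2
    · simp [Icc_eq_empty_of_lt hst]
  · rw [lintegral_expMeasure_comp_mul h₀ h₁ (fun r => ENNReal.ofReal ((ε₀ / ε₁ * m r) ^ 2))]
    simp only [mul_pow, ENNReal.ofReal_mul (sq_nonneg (ε₀ / ε₁))]
    rw [lintegral_const_mul' _ _ ENNReal.ofReal_ne_top]
    exact ENNReal.mul_lt_top ENNReal.ofReal_lt_top hfin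

/-- Slowing a competitor down by the factor `ε₀ / ε₁ ≤ 1` keeps the potential part of the
functional and multiplies the kinetic part by `ε₀ / ε₁`. -/
lemma Veps_antitone {X : Type*} [MetricSpace X] (φ : X → EReal) (x : X) {ε₀ ε₁ : ℝ}
    (h₀ : 0 < ε₀) (h : ε₀ ≤ ε₁) : Veps φ ε₁ x ≤ Veps φ ε₀ x := by
  have h₁ : 0 < ε₁ := h₀.trans_le h
  refine le_iInf fun ⟨⟨u, m⟩, hu⟩ => ?_
  refine (iInf_le _ ⟨⟨_, _⟩, hu.comp_mul h₀ h₁⟩).trans ?_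
  simp only [WEDfun]
  rw [← eIntegral_expMeasure_comp_mul h₀ h₁]
  refine eIntegral_mono _ (ae_of_all _ fun t => ?_)
  unfold wedIntegrand
  refine add_le_add_left ?_ _
  rw [EReal.coe_le_coe_iff]
  have e : ε₁ / 2 * (ε₀ / ε₁ * m (ε₀ / ε₁ * t)) ^ 2 =
      (ε₀ / ε₁) * (ε₀ / 2 * m (ε₀ / ε₁ * t) ^ 2) := by field_simp
  rw [e]
  exact mul_le_of_le_one_left (by positivity) ((div_le_one h₁).mpr h)

/-- The constant curve is a competitor. -/
lemma Veps_le {X : Type*} [MetricSpace X] (φ : X → EReal) (x : X) {ε : ℝ} (hε : 0 < ε) :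
    Veps φ ε x ≤ φ x := by
  have hadm : Admissible ε x (fun _ => x) (fun _ => 0) := by
    refine ⟨rfl, ⟨⟨fun _ => le_rfl, ?_, ?_, ?_⟩, ?_⟩, ?_⟩ <;> simp [tendsto_const_nhds]
  refine (iInf_le _ ⟨⟨_, _⟩, hadm⟩).trans ?_
  have e : wedIntegrand φ ε (fun _ => x) (fun _ => 0) = fun _ => φ x := by
    funext t; simp [wedIntegrand]
  simp only [WEDfun, e]
  exact (eIntegral_expMeasure_const hε _).le

/-! ### A weighted Hardy inequality -/

/-- Pointwise step of the Hardy inequality: Cauchy–Schwarz for the splitting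
`m = (m e^{-s/(4ε)}) · e^{s/(4ε)}` on `[0, t]`. -/
lemma sq_integral_le {ε : ℝ} (hε : 0 < ε) {m : ℝ → ℝ} (hm : ∀ t, 0 ≤ m t) {t : ℝ}
    (hint : IntegrableOn m (Icc 0 t)) :
    ENNReal.ofReal ((∫ r in Icc 0 t, m r) ^ 2) ≤
      ENNReal.ofReal (2 * ε * Real.exp (t / (2 * ε))) *
        ∫⁻ s in Icc 0 t, ENNReal.ofReal (m s ^ 2 * Real.exp (-s / (2 * ε))) := by
  rw [ENNReal.ofReal_pow (integral_nonneg hm),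
    ofReal_integral_eq_lintegral_ofReal hint (ae_of_all _ hm)]
  have hmm : AEMeasurable m (volume.restrict (Icc 0 t)) := hint.aemeasurable
  have hH := ENNReal.lintegral_mul_le_Lp_mul_Lq (volume.restrict (Icc 0 t))
    Real.HolderConjugate.two_two
    (f := fun s => ENNReal.ofReal (m s * Real.exp (-s / (4 * ε))))
    (g := fun s => ENNReal.ofReal (Real.exp (s / (4 * ε))))
    (by fun_prop) (by fun_prop)
  have e1 : ∀ s, ((fun s => ENNReal.ofReal (m s * Real.exp (-s / (4 * ε)))) *
      fun s => ENNReal.ofReal (Real.exp (s / (4 * ε)))) s = ENNReal.ofReal (m s) := by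
    intro s
    rw [Pi.mul_apply, ← ENNReal.ofReal_mul (mul_nonneg (hm s) (Real.exp_pos _).le), mul_assoc,
      ← Real.exp_add]
    congr 1
    rw [neg_div, neg_add_cancel, Real.exp_zero, mul_one]
  have e2 : ∀ s, ENNReal.ofReal (m s * Real.exp (-s / (4 * ε))) ^ (2:ℝ) =
      ENNReal.ofReal (m s ^ 2 * Real.exp (-s / (2 * ε))) := by
    intro s
    rw [ENNReal.rpow_two, ← ENNReal.ofReal_pow (mul_nonneg (hm s) (Real.exp_pos _).le), mul_pow,
      ← Real.exp_nat_mul]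
    congr 3
    push_cast; field_simp; ring
  have e3 : ∀ s, ENNReal.ofReal (Real.exp (s / (4 * ε))) ^ (2:ℝ) =
      ENNReal.ofReal (Real.exp (s / (2 * ε))) := by
    intro s
    rw [ENNReal.rpow_two, ← ENNReal.ofReal_pow (Real.exp_pos _).le, ← Real.exp_nat_mul]
    congr 2
    push_cast; field_simp; ring
  simp only [e1, e2, e3] at hH
  have e4 : ∫⁻ s in Icc 0 t, ENNReal.ofReal (Real.exp (s / (2 * ε))) ≤
      ENNReal.ofReal (2 * ε * Real.exp (t / (2 * ε))) := by
    -- enlarging the domain to `(-∞, t]` makes the integral explicit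
    have h1 : ∫⁻ s in Iic t, ENNReal.ofReal (Real.exp (s / (2 * ε))) =
        ENNReal.ofReal (2 * ε * Real.exp (t / (2 * ε))) := by
      have hpos : 0 < (2 * ε)⁻¹ := by positivity
      have hi := integrableOn_exp_mul_Iic hpos t
      have h := ofReal_integral_eq_lintegral_ofReal hi (ae_of_all _ fun t => (Real.exp_pos _).le)
      rw [integral_exp_mul_Iic hpos] at h
      have e : ∀ s : ℝ, s / (2 * ε) = (2 * ε)⁻¹ * s := fun s => by ring
      simp only [e]
      rw [← h]
      congr 1
      field_simp
    exact (lintegral_mono_set Icc_subset_Iic_self).trans h1.le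
  calc (∫⁻ s in Icc 0 t, ENNReal.ofReal (m s)) ^ 2
      ≤ ((∫⁻ s in Icc 0 t, ENNReal.ofReal (m s ^ 2 * Real.exp (-s / (2 * ε)))) ^ (1 / 2 : ℝ) *
        (∫⁻ s in Icc 0 t, ENNReal.ofReal (Real.exp (s / (2 * ε)))) ^ (1 / 2 : ℝ)) ^ 2 := by
        gcongr
    _ = (∫⁻ s in Icc 0 t, ENNReal.ofReal (m s ^ 2 * Real.exp (-s / (2 * ε)))) *
        ∫⁻ s in Icc 0 t, ENNReal.ofReal (Real.exp (s / (2 * ε))) := by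
        rw [mul_pow, ← ENNReal.rpow_natCast, ← ENNReal.rpow_natCast, ← ENNReal.rpow_mul,
          ← ENNReal.rpow_mul]
        norm_num
    _ ≤ _ := by rw [mul_comm]; gcongr

lemma aemeasurable_of_locInt {m : ℝ → ℝ} (hint : ∀ t, 0 ≤ t → IntegrableOn m (Icc 0 t)) :
    AEMeasurable m (volume.restrict (Ioi (0:ℝ))) := by
  have h : AEStronglyMeasurable m (volume.restrict (⋃ n : ℕ, Icc (0:ℝ) n)) :=
    aestronglyMeasurable_iUnion_iff.mpr fun n => (hint n n.cast_nonneg).aestronglyMeasurable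
  refine (h.mono_measure (Measure.restrict_mono ?_ le_rfl)).aemeasurable
  intro t ht
  obtain ⟨n, hn⟩ := exists_nat_ge t
  exact mem_iUnion.mpr ⟨n, le_of_lt ht, hn⟩

/-- The weighted Hardy inequality `∫ (∫₀ᵗ m)² dμ_ε ≤ 4ε² ∫ m² dμ_ε`, obtained by integrating
`sq_integral_le` and exchanging the order of integration. -/
lemma hardy {ε : ℝ} (hε : 0 < ε) {m : ℝ → ℝ} (hm : ∀ t, 0 ≤ m t)
    (hint : ∀ t, 0 ≤ t → IntegrableOn m (Icc 0 t)) :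
    ∫⁻ t, ENNReal.ofReal ((∫ r in Icc 0 t, m r) ^ 2) ∂expMeasure ε ≤
      ENNReal.ofReal (4 * ε ^ 2) * ∫⁻ t, ENNReal.ofReal (m t ^ 2) ∂expMeasure ε := by
  rw [lintegral_expMeasure, lintegral_expMeasure]
  set h : ℝ → ℝ≥0∞ := fun s => ENNReal.ofReal (m s ^ 2 * Real.exp (-s / (2 * ε))) with hh
  set k : ℝ → ℝ≥0∞ := fun t => ENNReal.ofReal (2 * Real.exp (-((2 * ε)⁻¹ * t))) with hk
  have hmm := aemeasurable_of_locInt hint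
  have hhm : AEMeasurable h (volume.restrict (Ioi (0:ℝ))) := by fun_prop
  have hkm : Measurable k := by fun_prop
  let F : ℝ → ℝ → ℝ≥0∞ := fun t s => {p : ℝ × ℝ | p.2 ≤ p.1}.indicator
    (fun p => k p.1 * h p.2) (t, s)
  have hF : AEMeasurable (Function.uncurry F)
      ((volume.restrict (Ioi (0:ℝ))).prod (volume.restrict (Ioi (0:ℝ)))) := by
    refine AEMeasurable.indicator ?_ (measurableSet_le measurable_snd measurable_fst)
    exact (hkm.comp measurable_fst).aemeasurable.mul hhm.comp_snd
  calc ∫⁻ t in Ioi (0:ℝ), ENNReal.ofReal (ε⁻¹ * Real.exp (-t / ε)) *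
        ENNReal.ofReal ((∫ r in Icc 0 t, m r) ^ 2)
      ≤ ∫⁻ t in Ioi (0:ℝ), ∫⁻ s in Ioi (0:ℝ), F t s := by
        refine setLIntegral_mono' measurableSet_Ioi fun t ht => ?_
        have e1 : ∫⁻ s in Ioi (0:ℝ), F t s = k t * ∫⁻ s in Icc 0 t, h s := by
          have e : ∀ s, F t s = (Iic t).indicator (fun s => k t * h s) s := fun s => by
            simp [F, indicator]
          simp only [e]
          rw [setLIntegral_indicator measurableSet_Iic, lintegral_const_mul' _ _
            ENNReal.ofReal_ne_top, Iic_inter_Ioi, setLIntegral_congr Ioc_ae_eq_Icc]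
        rw [e1]
        calc _ ≤ ENNReal.ofReal (ε⁻¹ * Real.exp (-t / ε)) *
              (ENNReal.ofReal (2 * ε * Real.exp (t / (2 * ε))) * ∫⁻ s in Icc 0 t, h s) := by
              gcongr
              exact sq_integral_le hε hm (hint t (le_of_lt ht))
          _ = k t * ∫⁻ s in Icc 0 t, h s := by
              rw [← mul_assoc, ← ENNReal.ofReal_mul (by positivity)]
              congr 2
              have e2 : -((2 * ε)⁻¹ * t) = -t / ε + t / (2 * ε) := by field_simp; ring
              rw [e2, Real.exp_add]
              field_simp
    _ = ∫⁻ s in Ioi (0:ℝ), ∫⁻ t in Ioi (0:ℝ), F t s := lintegral_lintegral_swap hF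
    _ = ∫⁻ s in Ioi (0:ℝ), ENNReal.ofReal (4 * ε ^ 2) *
        (ENNReal.ofReal (ε⁻¹ * Real.exp (-s / ε)) * ENNReal.ofReal (m s ^ 2)) := by
        refine setLIntegral_congr_fun measurableSet_Ioi fun s hs => ?_
        have hs0 : (0:ℝ) < s := hs
        have e : ∀ t, F t s = (Ici s).indicator (fun t => k t * h s) t := fun t => by
          simp [F, indicator]
        have e3 : Ici s ∩ Ioi (0:ℝ) = Ici s :=
          inter_eq_left.mpr fun t ht => lt_of_lt_of_le hs0 ht
        simp only [e]
        rw [setLIntegral_indicator measurableSet_Ici, lintegral_mul_const' _ _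
            ENNReal.ofReal_ne_top, e3, setLIntegral_congr Ioi_ae_eq_Ici.symm]
        simp only [hk, ENNReal.ofReal_mul zero_le_two]
        rw [lintegral_const_mul' _ _ (by simp), lintegral_exp_Ioi (by positivity),
          ← ENNReal.ofReal_mul zero_le_two, ← ENNReal.ofReal_mul (by positivity),
          ← ENNReal.ofReal_mul (by positivity), ← ENNReal.ofReal_mul (by positivity)]
        congr 1
        have e2 : -s / ε = -((2 * ε)⁻¹ * s) + -s / (2 * ε) := by field_simp; ring
        rw [e2, Real.exp_add]
        field_simp
        ring
    _ = _ := lintegral_const_mul' _ _ ENNReal.ofReal_ne_top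

/-! ### Comparison with the Moreau–Yosida regularization -/

/-- The value function dominates a Moreau–Yosida regularization of `φ`: if
`φ(y) ≥ c - d(x,y)²/(8ε)` for all `y`, then `V_ε(x) ≥ c`. -/
lemma le_Veps {X : Type*} [MetricSpace X] (φ : X → EReal) (x : X) {ε : ℝ} (hε : 0 < ε) (c : ℝ)
    (hφ : ∀ y, ((c - dist x y ^ 2 / (8 * ε) : ℝ) : EReal) ≤ φ y) : (c : EReal) ≤ Veps φ ε x := by
  refine le_iInf fun ⟨⟨u, m⟩, hu⟩ => ?_
  obtain ⟨hx, ⟨hm, -⟩, hfin⟩ := hu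
  simp only at hx hm hfin
  have := isProbabilityMeasure_expMeasure hε
  have hint : ∀ t, 0 ≤ t → IntegrableOn m (Icc 0 t) := fun t ht => hm.locInt 0 self_mem_Ici t ht
  set D : ℝ → ℝ := fun t => ∫ r in Icc 0 t, m r with hD
  have hDmono : Monotone D := by
    intro s t hst
    rcases le_or_gt 0 t with ht | ht
    · exact setIntegral_mono_set (hint t ht) (ae_of_all _ hm.nonneg)
        (Icc_subset_Icc_right hst).eventuallyLE
    · simp [hD, Icc_eq_empty_of_lt ht, Icc_eq_empty_of_lt (hst.trans_lt ht)]
  have hardy' := hardy hε hm.nonneg hint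
  have hmm : AEMeasurable m (expMeasure ε) :=
    (aemeasurable_of_locInt hint).mono_ac (expMeasure_absolutelyContinuous ε)
  have hm2 : Integrable (fun t => m t ^ 2) (expMeasure ε) :=
    (lintegral_ofReal_ne_top_iff_integrable (hmm.pow_const 2).aestronglyMeasurable
      (ae_of_all _ fun t => sq_nonneg _)).mp hfin.ne
  have hD2 : Integrable (fun t => D t ^ 2) (expMeasure ε) :=
    (lintegral_ofReal_ne_top_iff_integrable
      (hDmono.measurable.pow_const 2).aestronglyMeasurable
      (ae_of_all _ fun t => sq_nonneg _)).mp
      (hardy'.trans_lt (ENNReal.mul_lt_top ENNReal.ofReal_lt_top hfin)).ne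
  have hle : ∫ t, D t ^ 2 ∂expMeasure ε ≤ 4 * ε ^ 2 * ∫ t, m t ^ 2 ∂expMeasure ε := by
    rw [← ofReal_integral_eq_lintegral_ofReal hD2 (ae_of_all _ fun t => sq_nonneg _),
      ← ofReal_integral_eq_lintegral_ofReal hm2 (ae_of_all _ fun t => sq_nonneg _),
      ← ENNReal.ofReal_mul (by positivity)] at hardy'
    exact (ENNReal.ofReal_le_ofReal_iff
      (mul_nonneg (by positivity) (integral_nonneg fun t => sq_nonneg _))).mp hardy'
  let g : ℝ → ℝ := fun t => ε / 2 * m t ^ 2 + (c - D t ^ 2 / (8 * ε))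
  have hi1 := hm2.const_mul (ε / 2)
  have hi2 : Integrable (fun t => c - D t ^ 2 / (8 * ε)) (expMeasure ε) :=
    (integrable_const (μ := expMeasure ε) c).sub (hD2.div_const (8 * ε))
  have hg : Integrable g (expMeasure ε) := hi1.add hi2
  have hgint : c ≤ ∫ t, g t ∂expMeasure ε := by
    have e : ∫ t, g t ∂expMeasure ε = ε / 2 * (∫ t, m t ^ 2 ∂expMeasure ε) +
        (c - (∫ t, D t ^ 2 ∂expMeasure ε) / (8 * ε)) := by
      rw [integral_add hi1 hi2, integral_const_mul,
        integral_sub (integrable_const c) (hD2.div_const _), integral_div]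
      simp
    rw [e]
    have : (∫ t, D t ^ 2 ∂expMeasure ε) / (8 * ε) ≤
        ε / 2 * (∫ t, m t ^ 2 ∂expMeasure ε) := by
      rw [div_le_iff₀ (by positivity)]
      nlinarith
    linarith
  calc (c : EReal) ≤ ((∫ t, g t ∂expMeasure ε : ℝ) : EReal) := by exact_mod_cast hgint
    _ = eIntegral (expMeasure ε) fun t => (g t : EReal) := (eIntegral_coe _ hg).symm
    _ ≤ _ := by
      refine eIntegral_mono _ ?_
      filter_upwards [(expMeasure_absolutelyContinuous ε).ae_le
        (ae_restrict_mem measurableSet_Ioi)] with t ht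
      have hd : dist x (u t) ≤ D t := by
        have ht0 : (0:ℝ) ≤ t := le_of_lt ht
        rw [← hx]
        exact hm.dist_le 0 self_mem_Ici t ht0 ht0
      simp only [g, wedIntegrand, EReal.coe_add]
      refine add_le_add_right (le_trans ?_ (hφ (u t))) _
      rw [EReal.coe_le_coe_iff]
      gcongr

lemma exists_of_Veps_lt {X : Type*} [MetricSpace X] (φ : X → EReal) (x : X) {ε : ℝ} (hε : 0 < ε)
    {c : ℝ} (h : Veps φ ε x < c) : ∃ y, φ y < ((c - dist x y ^ 2 / (8 * ε) : ℝ) : EReal) := by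
  by_contra! hcon
  exact (le_Veps φ x hε c hcon).not_gt h

/-- The Γ-liminf inequality. If `V_ε(u_ε) < c` along a sequence `ε → 0`, there are `y_ε` with
`φ(y_ε) + d(u_ε, y_ε)²/(8ε) < c`; coercivity forces `d(u_ε, y_ε) → 0`, whence `y_ε → ū` in `σ` by
(MT2), and lower semicontinuity gives `φ(ū) ≤ c`. -/
lemma le_liminf_Veps {X : Type*} [MetricSpace X]
    (σ : TopologicalSpace X) (hcomp : Compatible σ)
    (φ : X → EReal) (ustar : X) (A B : ℝ) (hφ : LSCC σ φ ustar A B) (ubar : X) (ue : ℝ → X)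
    (hue : Tendsto ue (𝓝[>] (0:ℝ)) (@nhds X σ ubar))
    (hbd : ∃ C δ : ℝ, 0 < δ ∧ ∀ ε : ℝ, 0 < ε → ε < δ → dist (ue ε) ubar ≤ C) :
    φ ubar ≤ Filter.liminf (fun ε => Veps φ ε (ue ε)) (𝓝[>] (0:ℝ)) := by
  obtain ⟨C, δ, hδ, hC⟩ := hbd
  by_contra! hlt
  obtain ⟨c, hc1, hc2⟩ := EReal.lt_iff_exists_real_btwn.mp hlt
  have hB := hφ.hB
  have hA := hφ.hA
  -- for `ε < δ'` one has `ε < δ` and `B ≤ 1 / (16 ε)`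
  set δ' : ℝ := min (min δ 1) (1 / (16 * (B + 1))) with hδ'
  have hδ'pos : 0 < δ' := by positivity
  have hfr := (frequently_lt_of_liminf_lt (by isBoundedDefault) hc1).and_eventually
    (Ioo_mem_nhdsGT hδ'pos)
  obtain ⟨e, he, hP⟩ := exists_seq_forall_of_frequently hfr
  have hex : ∀ n, ∃ y, φ y < ((c - dist (ue (e n)) y ^ 2 / (8 * e n) : ℝ) : EReal) :=
    fun n => exists_of_Veps_lt φ _ (hP n).2.1 (hP n).1
  choose y hy using hex
  set K : ℝ := c + (B * (C + dist ubar ustar) ^ 2 + A) with hK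
  have hdC : ∀ n, dist (ue (e n)) ubar ≤ C := fun n =>
    hC _ (hP n).2.1 ((hP n).2.2.trans_le ((min_le_left _ _).trans (min_le_left _ _)))
  have hdist : ∀ n, dist (ue (e n)) (y n) ^ 2 ≤ 16 * e n * K := by
    intro n
    have he0 : 0 < e n := (hP n).2.1
    have he1 : e n < 1 / (16 * (B + 1)) := (hP n).2.2.trans_le (min_le_right _ _)
    have h1 := (hφ.coercive (y n) (ue (e n))).trans_lt (hy n)
    rw [EReal.coe_lt_coe_iff, dist_comm (y n)] at h1
    have h2 : dist (ue (e n)) ustar ≤ C + dist ubar ustar :=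
      (dist_triangle _ ubar _).trans (by gcongr; exact hdC n)
    have h3 : B * dist (ue (e n)) ustar ^ 2 ≤ B * (C + dist ubar ustar) ^ 2 := by gcongr
    rw [lt_div_iff₀ (by positivity)] at he1
    have h4 : B * dist (ue (e n)) (y n) ^ 2 ≤ dist (ue (e n)) (y n) ^ 2 / (16 * e n) := by
      rw [le_div_iff₀ (by positivity)]
      nlinarith [sq_nonneg (dist (ue (e n)) (y n))]
    have h5 : dist (ue (e n)) (y n) ^ 2 / (8 * e n) =
        2 * (dist (ue (e n)) (y n) ^ 2 / (16 * e n)) := by field_simp; ring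
    have h6 : dist (ue (e n)) (y n) ^ 2 / (16 * e n) ≤ K := by
      rw [hK]; linarith
    rw [div_le_iff₀ (by positivity)] at h6
    linarith
  have he0 : Tendsto e atTop (𝓝 0) := he.mono_right nhdsWithin_le_nhds
  have hlim : Tendsto (fun n => dist (ue (e n)) (y n)) atTop (𝓝 0) := by
    have h1 : Tendsto (fun n => √(16 * e n * K)) atTop (𝓝 0) := by
      have := ((he0.const_mul 16).mul_const K).sqrt
      simpa using this
    exact squeeze_zero (fun n => dist_nonneg) (fun n => Real.le_sqrt_of_sq_le (hdist n)) h1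
  have hyσ : Tendsto y atTop (@nhds X σ ubar) := by
    rw [@tendsto_nhds _ σ]
    intro U hU hxU
    obtain ⟨V, hV, hxV, r, hr, hVU⟩ := hcomp.mt2 U hU ubar hxU
    have h1 := (hue.comp he).eventually (@IsOpen.mem_nhds X σ ubar V hV hxV)
    filter_upwards [h1, hlim.eventually_lt_const hr] with n hn1 hn2
    refine hVU _ ((Metric.infDist_le_dist_of_mem hn1).trans_lt ?_)
    rwa [dist_comm]
  have hybd : ∃ C' : ℝ, ∀ n k, dist (y n) (y k) ≤ C' := by
    obtain ⟨R, hR⟩ := hlim.bddAbove_range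
    have hR' : ∀ n, dist (ue (e n)) (y n) ≤ R := fun n => hR (mem_range_self n)
    have h : ∀ n, dist (y n) ubar ≤ R + C := fun n =>
      (dist_triangle_left _ _ (ue (e n))).trans (add_le_add (hR' n) (hdC n))
    exact ⟨(R + C) + (R + C), fun n k =>
      (dist_triangle_right _ _ ubar).trans (add_le_add (h n) (h k))⟩
  have hfin := hφ.lsc y ubar hybd hyσ
  have hle : Filter.liminf (fun n => φ (y n)) atTop ≤ (c : EReal) := by
    refine liminf_le_of_le (by isBoundedDefault) fun b hb => ?_
    obtain ⟨n, hn⟩ := hb.exists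
    refine hn.trans ((hy n).le.trans ?_)
    rw [EReal.coe_le_coe_iff]
    have : 0 ≤ dist (ue (e n)) (y n) ^ 2 / (8 * e n) :=
      div_nonneg (sq_nonneg _) (mul_nonneg (by norm_num) (hP n).2.1.le)
    linarith
  exact (hfin.trans hle).not_gt hc2

/-- Lemma 5.1: under the LSCC assumptions, (1) `ε ↦ V_ε(ū)` is
nonincreasing; (2) `V_ε(ū) ↑ φ(ū)` as `ε ↓ 0`; (3) the Γ-liminf inequality
`φ(ū) ≤ liminf_{ε↓0} V_ε(ū_ε)` holds along families `ū_ε →σ ū` with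
`limsup_{ε↓0} d(ū_ε,ū) < ∞`. -/
theorem statement14
    {X : Type*} [MetricSpace X] [CompleteSpace X]
    (σ : TopologicalSpace X) (hcomp : Compatible σ)
    (φ : X → EReal) (ustar : X) (A B : ℝ) (hφ : LSCC σ φ ustar A B) :
    (∀ (x : X) (ε₀ ε₁ : ℝ), 0 < ε₀ → ε₀ ≤ ε₁ → Veps φ ε₁ x ≤ Veps φ ε₀ x) ∧
    (∀ x : X, Tendsto (fun ε => Veps φ ε x) (𝓝[>] (0:ℝ)) (𝓝 (φ x))) ∧
    (∀ (ubar : X) (ue : ℝ → X),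
      Tendsto ue (𝓝[>] (0:ℝ)) (@nhds X σ ubar) →
      (∃ C δ : ℝ, 0 < δ ∧ ∀ ε : ℝ, 0 < ε → ε < δ → dist (ue ε) ubar ≤ C) →
      φ ubar ≤ Filter.liminf (fun ε => Veps φ ε (ue ε)) (𝓝[>] (0:ℝ))) := by
  refine ⟨fun x _ _ h₀ h => Veps_antitone φ x h₀ h, fun x => ?_,
    le_liminf_Veps σ hcomp φ ustar A B hφ⟩
  refine tendsto_of_le_liminf_of_limsup_le ?_ ?_
  · exact le_liminf_Veps σ hcomp φ ustar A B hφ x (fun _ => x)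
      (@tendsto_const_nhds X σ _ _ _) ⟨0, 1, one_pos, fun _ _ _ => (dist_self x).le⟩
  · refine limsup_le_of_le (by isBoundedDefault) ?_
    filter_upwards [self_mem_nhdsWithin] with ε hε
    exact Veps_le φ x hε

end WED
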